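/- If S | F1 ~ S | F2 and S ⫫ Fi for i = 1, 2, then F1 ~ F2. -/

import Mathlib

namespace CCS

/-- Process terms over a set of actions `A`. -/
inductive Proc (A : Type) where
  | nil : Proc A
  | pre : A → Proc A → Proc A
  | par : Proc A → Proc A → Proc A
  | repl : A → Proc A → Proc A

namespace Proc

/-- Finite processes: no occurrence of replication. -/
def IsFin {A : Type} : Proc A → Prop
  | nil => True
  | pre _ p => IsFin p
  | par p q => IsFin p ∧ IsFin q
  | repl _ _ => False

/-- Processes of the calculus: replication is applied only to prefixed
finite processes, at top level. -/
def Wf {A : Type} : Proc A → Prop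
  | nil => True
  | pre _ p => IsFin p
  | par p q => Wf p ∧ Wf q
  | repl _ p => IsFin p

/-- Size: the number of prefixes. -/
def size {A : Type} : Proc A → ℕ
  | nil => 0
  | pre _ p => size p + 1
  | par p q => size p + size q
  | repl _ p => size p + 1

/-- `reps n p` is the parallel composition of `n` copies of `p`. -/
def reps {A : Type} : ℕ → Proc A → Proc A
  | 0, _ => nil
  | n+1, p => par p (reps n p)

/-- `bang F` is `!F`: for `F = α₁.F₁ | ... | αk.Fk` it is `!α₁.F₁ | ... | !αk.Fk`. -/
def bang {A : Type} : Proc A → Proc A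
  | nil => nil
  | pre a p => repl a p
  | par p q => par (bang p) (bang q)
  | repl a p => repl a p

end Proc

/-- The labelled transition system (no synchronisation). -/
inductive Step {A : Type} : Proc A → A → Proc A → Prop where
  | pre {a : A} {p : Proc A} : Step (Proc.pre a p) a p
  | repl {a : A} {p : Proc A} :
      Step (Proc.repl a p) a (Proc.par (Proc.repl a p) p)
  | parL {p : Proc A} {a : A} {p' : Proc A} (q : Proc A) :
      Step p a p' → Step (Proc.par p q) a (Proc.par p' q)
  | parR {q : Proc A} {a : A} {q' : Proc A} (p : Proc A) :
      Step q a q' → Step (Proc.par p q) a (Proc.par p q')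

/-- Strong bisimulations. -/
def IsBisim {A : Type} (R : Proc A → Proc A → Prop) : Prop :=
  Symmetric R ∧
    ∀ p q, R p q → ∀ a p', Step p a p' → ∃ q', Step q a q' ∧ R p' q'

/-- Strong bisimilarity `~`: the greatest strong bisimulation. -/
def Bisim {A : Type} (p q : Proc A) : Prop :=
  ∃ R, IsBisim R ∧ R p q

/-- The congruence `≡D`: the smallest congruence generated by the abelian
monoid laws for parallel composition (neutral element `0`) and the
distribution law `α.(F | α.F | ... | α.F) = α.F | α.F | ... | α.F`
(with as many occurrences of `F` on both sides). -/
inductive EqD {A : Type} : Proc A → Proc A → Prop where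
  | refl (p : Proc A) : EqD p p
  | symm {p q : Proc A} : EqD p q → EqD q p
  | trans {p q r : Proc A} : EqD p q → EqD q r → EqD p r
  | parComm (p q : Proc A) : EqD (Proc.par p q) (Proc.par q p)
  | parAssoc (p q r : Proc A) :
      EqD (Proc.par (Proc.par p q) r) (Proc.par p (Proc.par q r))
  | parNil (p : Proc A) : EqD (Proc.par p Proc.nil) p
  | distr (a : A) (F : Proc A) (n : ℕ) (hF : F.IsFin) :
      EqD (Proc.pre a (Proc.par F (Proc.reps n (Proc.pre a F))))
          (Proc.reps (n + 1) (Proc.pre a F))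
  | congPre (a : A) {p q : Proc A} : EqD p q → EqD (Proc.pre a p) (Proc.pre a q)
  | congPar {p p' q q' : Proc A} :
      EqD p p' → EqD q q' → EqD (Proc.par p q) (Proc.par p' q')
  | congRepl (a : A) {p q : Proc A} : EqD p q → EqD (Proc.repl a p) (Proc.repl a q)

/-- Finite (single-hole) contexts `D ::= [] | α.D | D|F`. -/
inductive FCtx (A : Type) where
  | hole : FCtx A
  | pre : A → FCtx A → FCtx A
  | par : FCtx A → Proc A → FCtx A

/-- Filling the hole of a finite context. -/
def FCtx.fill {A : Type} : FCtx A → Proc A → Proc A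
  | .hole, p => p
  | .pre a d, p => Proc.pre a (d.fill p)
  | .par d f, p => Proc.par (d.fill p) f

/-- Well-formedness of a finite context: the processes placed in parallel
are finite. -/
def FCtx.Wf {A : Type} : FCtx A → Prop
  | .hole => True
  | .pre _ d => d.Wf
  | .par d f => d.Wf ∧ f.IsFin

/-- Single-hole contexts `C ::= D | !α.D | C|P` (the hole never occurs
directly under a replication). -/
inductive Ctx (A : Type) where
  | ofD : FCtx A → Ctx A
  | repl : A → FCtx A → Ctx A
  | par : Ctx A → Proc A → Ctx A

/-- Filling the hole of a context. -/
def Ctx.fill {A : Type} : Ctx A → Proc A → Proc A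
  | .ofD d, p => d.fill p
  | .repl a d, p => Proc.repl a (d.fill p)
  | .par c q, p => Proc.par (c.fill p) q

/-- Well-formedness of a context. -/
def Ctx.Wf {A : Type} : Ctx A → Prop
  | .ofD d => d.Wf
  | .repl _ d => d.Wf
  | .par c p => c.Wf ∧ p.Wf

/-- `k` consecutive transitions. -/
inductive NSteps {A : Type} : Proc A → ℕ → Proc A → Prop where
  | zero (p : Proc A) : NSteps p 0 p
  | succ {p : Proc A} {a : A} {p' : Proc A} {k : ℕ} {q : Proc A} :
      Step p a p' → NSteps p' k q → NSteps p (k + 1) q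

/-- `P ⇒k Q`: `k` transitions from `P` reach a process `≡D Q`. -/
def Reduct {A : Type} (p : Proc A) (k : ℕ) (q : Proc A) : Prop :=
  ∃ p', NSteps p k p' ∧ EqD p' q

/-- `TopRepl S a G` holds when `!a.G` is one of the (top-level) replicated
parallel components of `S`. -/
inductive TopRepl {A : Type} : Proc A → A → Proc A → Prop where
  | repl (a : A) (p : Proc A) : TopRepl (Proc.repl a p) a p
  | parL {p : Proc A} {a : A} {r : Proc A} (q : Proc A) :
      TopRepl p a r → TopRepl (Proc.par p q) a r
  | parR {q : Proc A} {a : A} {r : Proc A} (p : Proc A) :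
      TopRepl q a r → TopRepl (Proc.par p q) a r

/-- `S` has only replicated components: `S = ∏i !αi.Si`. -/
def ReplOnly {A : Type} : Proc A → Prop
  | .nil => True
  | .pre _ _ => False
  | .par p q => ReplOnly p ∧ ReplOnly q
  | .repl _ p => p.IsFin

/-- `S ⫫ F` : for no component `!αi.Si` of `S` and no `k` do we have
`F ⇒k αi.Si`. -/
def Dis {A : Type} (S F : Proc A) : Prop :=
  ∀ a G, TopRepl S a G → ∀ k, ¬ Reduct F k (Proc.pre a G)

/-- `S ▷ R` : there is `k > 0` with `S ⇒k S | R`. -/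
def Purg {A : Type} (S R : Proc A) : Prop :=
  ∃ k, 0 < k ∧ Reduct S k (Proc.par S R)

/-- A process is a seed if no (well-formed) process of strictly smaller
size is bisimilar to it. -/
def IsSeed {A : Type} (p : Proc A) : Prop :=
  p.Wf ∧ ∀ q : Proc A, q.Wf → Bisim q p → p.size ≤ q.size

/-- The rewriting relation `⤳_T` (first argument), defined modulo `≡D` by
the axioms (B1) `C[α.F] ⤳_{!α.F|F'} C[0]` and (B2) `!α.F | !α.F | P ⤳_Q !α.F | P`. -/
inductive Rw {A : Type} : Proc A → Proc A → Proc A → Prop where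
  | B1 {a : A} {F F' : Proc A} (C : Ctx A) :
      F.IsFin → F'.Wf → C.Wf →
      Rw (Proc.par (Proc.repl a F) F') (C.fill (Proc.pre a F)) (C.fill Proc.nil)
  | B2 {a : A} {F P Q : Proc A} :
      F.IsFin → P.Wf → Q.Wf →
      Rw Q (Proc.par (Proc.repl a F) (Proc.par (Proc.repl a F) P))
           (Proc.par (Proc.repl a F) P)
  | eqD {T T' P P' Q Q' : Proc A} :
      EqD T T' → EqD P P' → Rw T' P' Q' → EqD Q Q' → Rw T P Q

/-- `⤳*_T` : the reflexive transitive closure of `⤳_T`. -/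
def RwStar {A : Type} (T : Proc A) : Proc A → Proc A → Prop :=
  Relation.ReflTransGen (Rw T)

/-- Convertibility `P ⋈ Q`: some process `T` satisfies `P ⤳*_T T` and `Q ⤳*_T T`. -/
def Convert {A : Type} (P Q : Proc A) : Prop :=
  ∃ T : Proc A, T.Wf ∧ RwStar T P T ∧ RwStar T Q T

/-- `∏i αi.Fi` for a list of prefixed components. -/
def prodPre {A : Type} (l : List (A × Proc A)) : Proc A :=
  (l.map fun x => Proc.pre x.1 x.2).foldr Proc.par Proc.nil

/-- `∏i !αi.Fi` for a list of prefixed components. -/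
def bangProd {A : Type} (l : List (A × Proc A)) : Proc A :=
  (l.map fun x => Proc.repl x.1 x.2).foldr Proc.par Proc.nil

end CCS


/-!
Bisimilarity classes form a commutative monoid under parallel composition. Let `s` be the class of
the seed `S`, and call a finite process absorption-free if `s` absorbs none of its prefixed
subterms. Modulo `s`, an absorbed subterm can be erased, and an absorption-free process has minimal
size. By minimality of the seed, its components `Sᵢ` are therefore absorption-free. If `F₁` and `F₂`
are absorption-free and equal modulo `s`, then a transition of `F₁` cannot be answered by `S`: it
would spawn some `Sᵢ` next to `F₂` and so exceed the minimal size. Hence `F₂` answers it, and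
`F₁ ~ F₂`.

It remains to see that `S ⫫ F` makes `F` absorption-free. Otherwise `F` reaches some absorbed `a.G`
with `G` absorption-free; `S` answers its transition by a component `!a.Sᵢ`, and cancellation gives
`G ~ Sᵢ`. Then `G ≡D Sᵢ`, because `≡D` is complete for finite processes, and `F ⇒ a.Sᵢ`, a
contradiction. Completeness follows from the unique decomposition of finite behaviours into
irreducibles.
-/

namespace CCS

/-! ### Unique decomposition into irreducibles -/

section Interleaving

variable {M : Type*} [AddCommMonoid M]

/-- The algebra of finite processes under parallel composition, as far as decomposition into primes
is concerned: transitions of a sum interleave, each transition decreases the size, and `0` is the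
only inert element. -/
structure IsInterleaving (size : M →+ ℕ) (step : M → M → Prop) : Prop where
  size_lt {x y : M} : step x y → size y < size x
  exists_step {x : M} : x ≠ 0 → ∃ y, step x y
  step_add_iff {x y z : M} :
    step (x + y) z ↔ (∃ x', step x x' ∧ z = x' + y) ∨ ∃ y', step y y' ∧ z = x + y'

theorem size_le_size_sum_of_mem (size : M →+ ℕ) {s : Multiset M} {x : M} (hx : x ∈ s) :
    size x ≤ size s.sum := by
  rw [map_multiset_sum]
  exact Multiset.le_sum_of_mem (Multiset.mem_map_of_mem size hx)

/-- Decompositions into irreducibles are unique for elements of size less than `n`. -/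
def UniqueBelow (size : M →+ ℕ) (n : ℕ) : Prop :=
  ∀ s t : Multiset M, (∀ p ∈ s, AddIrreducible p) → (∀ p ∈ t, AddIrreducible p) →
    s.sum = t.sum → size s.sum < n → s = t

namespace IsInterleaving

variable {size : M →+ ℕ} {step : M → M → Prop} (h : IsInterleaving size step)
include h

theorem size_pos {x : M} (hx : x ≠ 0) : 0 < size x :=
  have ⟨_, hy⟩ := h.exists_step hx
  (Nat.zero_le _).trans_lt (h.size_lt hy)

theorem isAddUnit_iff {x : M} : IsAddUnit x ↔ x = 0 := by
  refine ⟨fun hx => ?_, fun hx => hx ▸ isAddUnit_zero⟩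
  obtain ⟨y, hxy⟩ := isAddUnit_iff_exists_neg.1 hx
  by_contra hne
  have hsum : size x + size y = 0 := by rw [← map_add, hxy, map_zero]
  have := h.size_pos hne
  omega

theorem ne_zero_of_irreducible {x : M} (hx : AddIrreducible x) : x ≠ 0 :=
  fun h0 => hx.not_isAddUnit (h.isAddUnit_iff.2 h0)

theorem exists_add_of_not_irreducible {x : M} (hx : x ≠ 0) (hirr : ¬ AddIrreducible x) :
    ∃ y z, x = y + z ∧ y ≠ 0 ∧ z ≠ 0 := by
  simpa only [addIrreducible_iff, h.isAddUnit_iff, hx, not_false_eq_true, true_and, not_forall,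
    not_or, exists_prop] using hirr

theorem exists_factorization (x : M) :
    ∃ s : Multiset M, (∀ p ∈ s, AddIrreducible p) ∧ s.sum = x := by
  induction hn : size x using Nat.strong_induction_on generalizing x with
  | _ n ih =>
    by_cases h0 : x = 0
    · exact ⟨0, by simp, by simp [h0]⟩
    by_cases hirr : AddIrreducible x
    · exact ⟨{x}, by simpa using hirr, by simp⟩
    obtain ⟨y, z, rfl, hy, hz⟩ := h.exists_add_of_not_irreducible h0 hirr
    have hsize := map_add size y z
    have hy_pos := h.size_pos hy
    have hz_pos := h.size_pos hz
    obtain ⟨s, hs, rfl⟩ := ih (size y) (by omega) y rfl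
    obtain ⟨t, ht, rfl⟩ := ih (size z) (by omega) z rfl
    exact ⟨s + t, fun p hp => (Multiset.mem_add.1 hp).elim (hs p) (ht p), by simp⟩

theorem card_le_size_sum {s : Multiset M} (hs : ∀ p ∈ s, AddIrreducible p) :
    s.card ≤ size s.sum := by
  have hone : ∀ n ∈ s.map size, 1 ≤ n := by
    simpa using fun p hp => Nat.one_le_iff_ne_zero.2
      (h.size_pos (h.ne_zero_of_irreducible (hs p hp))).ne'
  simpa [map_multiset_sum] using Multiset.card_nsmul_le_sum hone

/-- A chosen decomposition of `x` into irreducibles. -/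
noncomputable def factors (x : M) : Multiset M :=
  (h.exists_factorization x).choose

theorem irreducible_of_mem_factors {x p : M} (hp : p ∈ h.factors x) : AddIrreducible p :=
  (h.exists_factorization x).choose_spec.1 p hp

theorem sum_factors (x : M) : (h.factors x).sum = x :=
  (h.exists_factorization x).choose_spec.2

theorem count_factors_eq_zero [DecidableEq M] {x y y' : M} (hstep : step y y')
    (hle : size y ≤ size x) : (h.factors y').count x = 0 := by
  refine Multiset.count_eq_zero.2 fun hx => ?_
  have hx_le := size_le_size_sum_of_mem size hx
  rw [h.sum_factors] at hx_le
  exact absurd (h.size_lt hstep) (by omega)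

theorem step_sum_of_mem [DecidableEq M] {s : Multiset M} {y y' : M} (hy : y ∈ s)
    (hstep : step y y') : step s.sum ((s.erase y).sum + y') := by
  rw [← Multiset.sum_erase hy, add_comm y]
  exact h.step_add_iff.2 (.inr ⟨y', hstep, rfl⟩)

theorem exists_mem_of_step_sum [DecidableEq M] {s : Multiset M} {z : M} (hstep : step s.sum z) :
    ∃ y ∈ s, ∃ y', step y y' ∧ z = (s.erase y).sum + y' := by
  induction s using Multiset.induction_on generalizing z with
  | empty => exact absurd (h.size_lt hstep) (by simp)
  | cons x s ih =>
    rw [Multiset.sum_cons, h.step_add_iff] at hstep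
    rcases hstep with ⟨x', hx', rfl⟩ | ⟨z', hz', rfl⟩
    · exact ⟨x, by simp, x', hx', by simp [add_comm]⟩
    · obtain ⟨y, hy, y', hy', rfl⟩ := ih hz'
      refine ⟨y, by simp [hy], y', hy', ?_⟩
      rw [Multiset.erase_cons_tail_of_mem hy, Multiset.sum_cons, add_assoc]

section Uniqueness

variable [DecidableEq M] {s t : Multiset M} (hs : ∀ p ∈ s, AddIrreducible p)
  (ht : ∀ p ∈ t, AddIrreducible p) (hsum : s.sum = t.sum)
  (hunique : UniqueBelow size (size s.sum))
include hs ht hsum hunique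

theorem exists_matching_step {y y' : M} (hy : y ∈ s) (hstep : step y y') :
    ∃ z ∈ t, ∃ z', step z z' ∧ s.erase y + h.factors y' = t.erase z + h.factors z' := by
  have hs_step := h.step_sum_of_mem hy hstep
  obtain ⟨z, hz, z', hz', heq⟩ := h.exists_mem_of_step_sum (hsum ▸ hs_step)
  refine ⟨z, hz, z', hz', hunique _ _ ?_ ?_ ?_ ?_⟩
  · exact fun p hp => (Multiset.mem_add.1 hp).elim (fun hp => hs p (Multiset.mem_of_mem_erase hp))
      h.irreducible_of_mem_factors
  · exact fun p hp => (Multiset.mem_add.1 hp).elim (fun hp => ht p (Multiset.mem_of_mem_erase hp))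
      h.irreducible_of_mem_factors
  · simpa only [Multiset.sum_add, h.sum_factors] using heq
  · simpa only [Multiset.sum_add, h.sum_factors] using h.size_lt hs_step

variable {x : M} (hcount : t.count x < s.count x)
  (hlarger : ∀ y, size x < size y → s.count y = t.count y)
include hcount hlarger

/-- Among the transitions of the factors other than `x`, one that releases the most copies of `x`
cannot be matched by `t`, which starts with fewer copies. -/
theorem eq_of_mem_of_count_lt {y : M} (hy : y ∈ s) : y = x := by
  by_contra hyx
  let gains : Set ℕ :=
    {g | ∃ y ∈ s, y ≠ x ∧ ∃ y', step y y' ∧ (h.factors y').count x = g}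
  have hnonempty : gains.Nonempty :=
    have ⟨y', hy'⟩ := h.exists_step (h.ne_zero_of_irreducible (hs y hy))
    ⟨_, y, hy, hyx, y', hy', rfl⟩
  have hbdd : BddAbove gains := by
    refine ⟨size s.sum, ?_⟩
    rintro _ ⟨y, hy, -, y', hy', rfl⟩
    calc (h.factors y').count x ≤ (h.factors y').card := Multiset.count_le_card _ _
      _ ≤ size y' := by
        simpa only [h.sum_factors] using h.card_le_size_sum fun _ => h.irreducible_of_mem_factors
      _ ≤ size y := (h.size_lt hy').le
      _ ≤ size s.sum := size_le_size_sum_of_mem size hy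
  obtain ⟨_, ⟨y, hy, hyx, y', hy', rfl⟩, hmax⟩ := hbdd.exists_isGreatest_of_nonempty hnonempty
  obtain ⟨z, hz, z', hz', heq⟩ := h.exists_matching_step hs ht hsum hunique hy hy'
  have hgain : (h.factors z').count x ≤ (h.factors y').count x := by
    rcases lt_or_ge (size x) (size z) with hlt | hle
    · have hzs : z ∈ s := by rwa [← Multiset.count_pos, hlarger z hlt, Multiset.count_pos]
      exact hmax ⟨z, hzs, fun hzx => hlt.ne (hzx ▸ rfl), z', hz', rfl⟩
    · exact (h.count_factors_eq_zero hz' hle).trans_le (Nat.zero_le _)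
  have hcount_eq := congrArg (Multiset.count x) heq
  rw [Multiset.count_add, Multiset.count_add, Multiset.count_erase_of_ne (Ne.symm hyx)] at hcount_eq
  have := Multiset.count_le_of_le x (Multiset.erase_le z t)
  omega

theorem count_erase_add_one_of_count_lt {z : M} (hz : z ∈ t) :
    (t.erase z).count x + 1 = s.count x := by
  have hall : ∀ y ∈ s, y = x := fun y =>
    h.eq_of_mem_of_count_lt hs ht hsum hunique hcount hlarger
  have hzx : size z ≤ size x := by
    by_contra! hlt
    have hzs : z ∈ s := by rwa [← Multiset.count_pos, hlarger z hlt, Multiset.count_pos]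
    exact hlt.ne' (congrArg size (hall z hzs))
  obtain ⟨z', hz'⟩ := h.exists_step (h.ne_zero_of_irreducible (ht z hz))
  obtain ⟨y, hy, y', hy', heq⟩ :=
    h.exists_matching_step ht hs hsum.symm (hsum ▸ hunique) hz hz'
  obtain rfl := hall y hy
  have hcount_eq := congrArg (Multiset.count y) heq
  rw [Multiset.count_add, Multiset.count_add, h.count_factors_eq_zero hz' hzx,
    h.count_factors_eq_zero hy' le_rfl, Multiset.count_erase_self] at hcount_eq
  omega

theorem not_count_lt : False := by
  have hall : ∀ y ∈ s, y = x := fun y =>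
    h.eq_of_mem_of_count_lt hs ht hsum hunique hcount hlarger
  have herase : ∀ z ∈ t, (t.erase z).count x + 1 = s.count x := fun z =>
    h.count_erase_add_one_of_count_lt hs ht hsum hunique hcount hlarger
  have hxt : x ∉ t := fun hx => by
    have hcount_eq := herase x hx
    rw [Multiset.count_erase_self] at hcount_eq
    have := Multiset.count_pos.2 hx
    omega
  have hxs : x ∈ s := Multiset.count_pos.1 (by omega)
  have hx0 := h.ne_zero_of_irreducible (hs x hxs)
  have hs0 : s.sum ≠ 0 := fun h0 => by
    have hle := size_le_size_sum_of_mem size hxs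
    rw [h0, map_zero] at hle
    exact (h.size_pos hx0).not_ge hle
  obtain ⟨z, hz⟩ := Multiset.exists_mem_of_ne_zero (s := t) (by rintro rfl; exact hs0 (by simpa))
  have hs_singleton : s = {x} := by
    have hone : s.count x = 1 := by
      rw [← herase z hz,
        Multiset.count_eq_zero.2 fun hx => hxt (Multiset.mem_of_mem_erase hx)]
    rw [Multiset.eq_replicate_card.2 hall, ← Multiset.count_eq_card.2 fun y hy => (hall y hy).symm,
      hone, Multiset.replicate_one]
  have hx_eq : x = z + (t.erase z).sum := by
    rw [Multiset.sum_erase hz, ← hsum, hs_singleton, Multiset.sum_singleton]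
  rcases (hs x hxs).isAddUnit_or_isAddUnit hx_eq with hz0 | hrest
  · exact h.ne_zero_of_irreducible (ht z hz) (h.isAddUnit_iff.1 hz0)
  · rw [h.isAddUnit_iff.1 hrest, add_zero] at hx_eq
    exact hxt (hx_eq ▸ hz)

end Uniqueness

theorem factorization_unique {s t : Multiset M} (hs : ∀ p ∈ s, AddIrreducible p)
    (ht : ∀ p ∈ t, AddIrreducible p) (hsum : s.sum = t.sum) : s = t := by
  classical
  induction hn : size s.sum using Nat.strong_induction_on generalizing s t with
  | _ n ih =>
    have hunique : UniqueBelow size (size s.sum) := fun s' t' hs' ht' hsum' hlt =>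
      ih _ (hn ▸ hlt) hs' ht' hsum' rfl
    by_contra hne
    let differing := (s + t).toFinset.filter fun x => s.count x ≠ t.count x
    have hmem : ∀ x, x ∈ differing ↔ s.count x ≠ t.count x := by
      intro x
      simp only [differing, Finset.mem_filter, Multiset.mem_toFinset, ← Multiset.count_pos,
        Multiset.count_add]
      omega
    have hnonempty : differing.Nonempty := by
      contrapose! hne
      exact Multiset.ext.2 fun x => not_not.1 fun hx => by simpa [hne] using (hmem x).2 hx
    obtain ⟨x, hx, hmax⟩ := differing.exists_max_image size hnonempty
    have hlarger : ∀ y, size x < size y → s.count y = t.count y := fun y hlt =>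
      not_not.1 fun hy => (hmax y ((hmem y).2 hy)).not_gt hlt
    rcases lt_or_gt_of_ne ((hmem x).1 hx) with hlt | hgt
    · exact h.not_count_lt ht hs hsum.symm (hsum ▸ hunique) hlt fun y hy => (hlarger y hy).symm
    · exact h.not_count_lt hs ht hsum hunique hgt hlarger

theorem factors_add (x y : M) : h.factors (x + y) = h.factors x + h.factors y :=
  h.factorization_unique (fun _ => h.irreducible_of_mem_factors)
    (fun _ hp => (Multiset.mem_add.1 hp).elim h.irreducible_of_mem_factors
      h.irreducible_of_mem_factors)
    (by simp only [Multiset.sum_add, h.sum_factors])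

theorem factors_of_irreducible {p : M} (hp : AddIrreducible p) : h.factors p = {p} :=
  h.factorization_unique (fun _ => h.irreducible_of_mem_factors) (by simpa using hp)
    (by rw [h.sum_factors, Multiset.sum_singleton])

theorem add_right_cancel {x y z : M} (hxy : x + z = y + z) : x = y := by
  have hfactors := congrArg h.factors hxy
  rw [h.factors_add, h.factors_add, add_left_inj] at hfactors
  rw [← h.sum_factors x, hfactors, h.sum_factors]

theorem eq_of_unique_step {p q r x : M} (hp : AddIrreducible p) (hq : AddIrreducible q)
    (hx : ∀ y, step (p + (q + r)) y → y = x) : p = q := by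
  obtain ⟨p', hp'⟩ := h.exists_step (h.ne_zero_of_irreducible hp)
  obtain ⟨q', hq'⟩ := h.exists_step (h.ne_zero_of_irreducible hq)
  have hpx := hx _ (h.step_add_iff.2 (.inl ⟨p', hp', rfl⟩))
  have hqx := hx _ (h.step_add_iff.2 (.inr ⟨_, h.step_add_iff.2 (.inl ⟨q', hq', rfl⟩), rfl⟩))
  have hswap : p' + q = p + q' := h.add_right_cancel (z := r) <| by
    rw [add_assoc, hpx, ← hqx, add_assoc]
  have hmem : p ∈ h.factors p' + {q} := by
    rw [← h.factors_of_irreducible hq, ← h.factors_add, hswap, h.factors_add,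
      h.factors_of_irreducible hp]
    simp
  rcases Multiset.mem_add.1 hmem with hmem | hmem
  · have hle := size_le_size_sum_of_mem size hmem
    rw [h.sum_factors] at hle
    exact absurd hle (h.size_lt hp').not_ge
  · exact Multiset.mem_singleton.1 hmem

theorem exists_eq_nsmul_of_unique_step {x x' : M} (hx : ∀ y, step x y ↔ y = x') :
    ∃ (p p' : M) (n : ℕ),
      AddIrreducible p ∧ x = p + n • p ∧ x' = p' + n • p ∧ ∀ y, step p y ↔ y = p' := by
  obtain ⟨s, hs, rfl⟩ := h.exists_factorization x
  have hs0 : s ≠ 0 := by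
    rintro rfl
    exact absurd (h.size_lt ((hx x').2 rfl)) (by simp)
  obtain ⟨p, hp⟩ := Multiset.exists_mem_of_ne_zero hs0
  obtain ⟨r, rfl⟩ := Multiset.exists_cons_of_mem hp
  have hall : ∀ q ∈ r, q = p := by
    intro q hq
    obtain ⟨r, rfl⟩ := Multiset.exists_cons_of_mem hq
    simp only [Multiset.sum_cons] at hx
    exact (h.eq_of_unique_step (hs p hp) (hs q (by simp)) fun y => (hx y).1).symm
  have hsum : (p ::ₘ r).sum = p + r.card • p := by
    rw [Multiset.sum_cons, Multiset.eq_replicate_card.2 hall, Multiset.sum_replicate,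
      Multiset.card_replicate]
  have hderiv : ∀ y, step p y → y + r.card • p = x' := fun y hy =>
    (hx _).1 (hsum ▸ h.step_add_iff.2 (.inl ⟨y, hy, rfl⟩))
  obtain ⟨p', hp'⟩ := h.exists_step (h.ne_zero_of_irreducible (hs p hp))
  refine ⟨p, p', r.card, hs p hp, hsum, (hderiv p' hp').symm, fun y => ⟨fun hy => ?_, ?_⟩⟩
  · exact h.add_right_cancel ((hderiv y hy).trans (hderiv p' hp').symm)
  · rintro rfl
    exact hp'

end IsInterleaving

end Interleaving

/-! ### Bisimilarity -/

variable {A : Type}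

theorem not_step_nil {a : A} {p : Proc A} : ¬ Step .nil a p := nofun

theorem step_pre_iff {a b : A} {p q : Proc A} : Step (.pre a p) b q ↔ b = a ∧ q = p := by
  constructor
  · rintro ⟨⟩
    exact ⟨rfl, rfl⟩
  · rintro ⟨rfl, rfl⟩
    exact .pre

theorem step_repl_iff {a b : A} {p q : Proc A} :
    Step (.repl a p) b q ↔ b = a ∧ q = .par (.repl a p) p := by
  constructor
  · rintro ⟨⟩
    exact ⟨rfl, rfl⟩
  · rintro ⟨rfl, rfl⟩
    exact .repl

theorem step_par_iff {a : A} {p q r : Proc A} :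
    Step (.par p q) a r ↔
      (∃ p', Step p a p' ∧ r = .par p' q) ∨ ∃ q', Step q a q' ∧ r = .par p q' := by
  constructor
  · rintro (_ | _)
    · exact .inl ⟨_, ‹_›, rfl⟩
    · exact .inr ⟨_, ‹_›, rfl⟩
  · rintro (⟨p', hp, rfl⟩ | ⟨q', hq, rfl⟩)
    · exact .parL q hp
    · exact .parR p hq

namespace Bisim

theorem step {p q p' : Proc A} {a : A} (h : Bisim p q) (hp : Step p a p') :
    ∃ q', Step q a q' ∧ Bisim p' q' := by
  obtain ⟨R, hR, hpq⟩ := h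
  obtain ⟨q', hq, hpq'⟩ := hR.2 p q hpq a p' hp
  exact ⟨q', hq, R, hR, hpq'⟩

theorem symm {p q : Proc A} (h : Bisim p q) : Bisim q p := by
  obtain ⟨R, hR, hpq⟩ := h
  exact ⟨R, hR, hR.1 hpq⟩

theorem refl (p : Proc A) : Bisim p p :=
  ⟨Eq, ⟨fun _ _ => Eq.symm, by rintro p _ rfl a p' hp; exact ⟨p', hp, rfl⟩⟩, rfl⟩

theorem trans {p q r : Proc A} (hpq : Bisim p q) (hqr : Bisim q r) : Bisim p r := by
  refine ⟨fun p r => ∃ q, Bisim p q ∧ Bisim q r, ⟨?_, ?_⟩, q, hpq, hqr⟩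
  · rintro p r ⟨q, hpq, hqr⟩
    exact ⟨q, hqr.symm, hpq.symm⟩
  · rintro p r ⟨q, hpq, hqr⟩ a p' hp
    obtain ⟨q', hq, hpq'⟩ := hpq.step hp
    obtain ⟨r', hr, hqr'⟩ := hqr.step hq
    exact ⟨r', hr, q', hpq', hqr'⟩

theorem par {p p' q q' : Proc A} (hp : Bisim p p') (hq : Bisim q q') :
    Bisim (.par p q) (.par p' q') := by
  refine ⟨fun x y => ∃ p p' q q', x = .par p q ∧ y = .par p' q' ∧ Bisim p p' ∧ Bisim q q',
    ⟨?_, ?_⟩, p, p', q, q', rfl, rfl, hp, hq⟩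
  · rintro _ _ ⟨p, p', q, q', rfl, rfl, hp, hq⟩
    exact ⟨p', p, q', q, rfl, rfl, hp.symm, hq.symm⟩
  · rintro _ _ ⟨p, p', q, q', rfl, rfl, hp, hq⟩ a r hr
    rcases step_par_iff.1 hr with ⟨p₁, hp₁, rfl⟩ | ⟨q₁, hq₁, rfl⟩
    · obtain ⟨p₁', hp₁', hp₁⟩ := hp.step hp₁
      exact ⟨_, .parL q' hp₁', p₁, p₁', q, q', rfl, rfl, hp₁, hq⟩
    · obtain ⟨q₁', hq₁', hq₁⟩ := hq.step hq₁
      exact ⟨_, .parR p' hq₁', p, p', q₁, q₁', rfl, rfl, hp, hq₁⟩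

theorem pre (a : A) {p q : Proc A} (hpq : Bisim p q) : Bisim (.pre a p) (.pre a q) := by
  refine ⟨fun x y => Bisim x y ∨ ∃ p q, x = .pre a p ∧ y = .pre a q ∧ Bisim p q, ⟨?_, ?_⟩,
    .inr ⟨p, q, rfl, rfl, hpq⟩⟩
  · rintro _ _ (h | ⟨p, q, rfl, rfl, h⟩)
    · exact .inl h.symm
    · exact .inr ⟨q, p, rfl, rfl, h.symm⟩
  · rintro _ y (h | ⟨p, q, rfl, rfl, h⟩) b x' hx
    · obtain ⟨y', hy, h'⟩ := h.step hx
      exact ⟨y', hy, .inl h'⟩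
    · obtain ⟨rfl, rfl⟩ := step_pre_iff.1 hx
      exact ⟨q, .pre, .inl h⟩

end Bisim

theorem EqD.of_step_reps_pre {a b : A} {p q : Proc A} {n : ℕ}
    (h : Step (.reps (n + 1) (.pre a p)) b q) :
    b = a ∧ EqD (.par p (.reps n (.pre a p))) q := by
  induction n generalizing q with
  | zero =>
    rcases step_par_iff.1 h with ⟨p', hp, rfl⟩ | ⟨_, hnil, -⟩
    · obtain ⟨rfl, rfl⟩ := step_pre_iff.1 hp
      exact ⟨rfl, .refl _⟩
    · exact absurd hnil not_step_nil
  | succ n ih =>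
    rcases step_par_iff.1 h with ⟨p', hp, rfl⟩ | ⟨q', hq, rfl⟩
    · obtain ⟨rfl, rfl⟩ := step_pre_iff.1 hp
      exact ⟨rfl, .refl _⟩
    · obtain ⟨rfl, hpq⟩ := ih hq
      have hcomm : EqD (.par p (.par (.pre b p) (.reps n (.pre b p))))
          (.par (.pre b p) (.par p (.reps n (.pre b p)))) :=
        (EqD.parAssoc _ _ _).symm.trans
          ((EqD.congPar (.parComm _ _) (.refl _)).trans (.parAssoc _ _ _))
      exact ⟨rfl, hcomm.trans (.congPar (.refl _) hpq)⟩

/-- One half of the transfer property of `≡D`: every transition of `p` is answered by `q` up to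
`≡D`. -/
def IsMatchedBy (p q : Proc A) : Prop :=
  ∀ ⦃a p'⦄, Step p a p' → ∃ q', Step q a q' ∧ EqD p' q'

namespace IsMatchedBy

theorem refl (p : Proc A) : IsMatchedBy p p :=
  fun _ p' hp => ⟨p', hp, .refl _⟩

theorem trans {p q r : Proc A} (hpq : IsMatchedBy p q) (hqr : IsMatchedBy q r) :
    IsMatchedBy p r := by
  intro a p' hp
  obtain ⟨q', hq, hpq'⟩ := hpq hp
  obtain ⟨r', hr, hqr'⟩ := hqr hq
  exact ⟨r', hr, hpq'.trans hqr'⟩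

theorem par_comm (p q : Proc A) : IsMatchedBy (.par p q) (.par q p) := by
  intro a r hr
  rcases step_par_iff.1 hr with ⟨p', hp, rfl⟩ | ⟨q', hq, rfl⟩
  · exact ⟨_, .parR _ hp, .parComm _ _⟩
  · exact ⟨_, .parL _ hq, .parComm _ _⟩

theorem par_assoc (p q r : Proc A) : IsMatchedBy (.par (.par p q) r) (.par p (.par q r)) := by
  intro a _ h
  rcases step_par_iff.1 h with ⟨_, hpq, rfl⟩ | ⟨r', hr, rfl⟩
  · rcases step_par_iff.1 hpq with ⟨p', hp, rfl⟩ | ⟨q', hq, rfl⟩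
    · exact ⟨_, .parL _ hp, .parAssoc _ _ _⟩
    · exact ⟨_, .parR _ (.parL _ hq), .parAssoc _ _ _⟩
  · exact ⟨_, .parR _ (.parR _ hr), .parAssoc _ _ _⟩

theorem par_assoc_symm (p q r : Proc A) :
    IsMatchedBy (.par p (.par q r)) (.par (.par p q) r) := by
  intro a _ h
  rcases step_par_iff.1 h with ⟨p', hp, rfl⟩ | ⟨_, hqr, rfl⟩
  · exact ⟨_, .parL _ (.parL _ hp), (EqD.parAssoc _ _ _).symm⟩
  · rcases step_par_iff.1 hqr with ⟨q', hq, rfl⟩ | ⟨r', hr, rfl⟩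
    · exact ⟨_, .parL _ (.parR _ hq), (EqD.parAssoc _ _ _).symm⟩
    · exact ⟨_, .parR _ hr, (EqD.parAssoc _ _ _).symm⟩

theorem par_nil (p : Proc A) : IsMatchedBy (.par p .nil) p := by
  intro a _ h
  rcases step_par_iff.1 h with ⟨p', hp, rfl⟩ | ⟨_, hnil, -⟩
  · exact ⟨p', hp, .parNil _⟩
  · exact absurd hnil not_step_nil

theorem pre (a : A) {p q : Proc A} (h : EqD p q) : IsMatchedBy (.pre a p) (.pre a q) := by
  intro b _ hp
  obtain ⟨rfl, rfl⟩ := step_pre_iff.1 hp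
  exact ⟨_, .pre, h⟩

theorem repl (a : A) {p q : Proc A} (h : EqD p q) : IsMatchedBy (.repl a p) (.repl a q) := by
  intro b _ hp
  obtain ⟨rfl, rfl⟩ := step_repl_iff.1 hp
  exact ⟨_, .repl, .congPar (.congRepl _ h) h⟩

theorem par {p p' q q' : Proc A} (hp : EqD p p') (hq : EqD q q') (hpm : IsMatchedBy p p')
    (hqm : IsMatchedBy q q') : IsMatchedBy (.par p q) (.par p' q') := by
  intro a _ h
  rcases step_par_iff.1 h with ⟨x, hx, rfl⟩ | ⟨x, hx, rfl⟩
  · obtain ⟨y, hy, hxy⟩ := hpm hx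
    exact ⟨_, .parL _ hy, .congPar hxy hq⟩
  · obtain ⟨y, hy, hxy⟩ := hqm hx
    exact ⟨_, .parR _ hy, .congPar hp hxy⟩

theorem pre_reps (a : A) (p : Proc A) (n : ℕ) :
    IsMatchedBy (.pre a (.par p (.reps n (.pre a p)))) (.reps (n + 1) (.pre a p)) := by
  intro b _ h
  obtain ⟨rfl, rfl⟩ := step_pre_iff.1 h
  exact ⟨_, .parL _ .pre, .refl _⟩

theorem reps_pre (a : A) (p : Proc A) (n : ℕ) :
    IsMatchedBy (.reps (n + 1) (.pre a p)) (.pre a (.par p (.reps n (.pre a p)))) := by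
  intro b q hq
  obtain ⟨rfl, h⟩ := EqD.of_step_reps_pre hq
  exact ⟨_, .pre, h.symm⟩

end IsMatchedBy

theorem EqD.isMatchedBy_and_isMatchedBy {p q : Proc A} (h : EqD p q) :
    IsMatchedBy p q ∧ IsMatchedBy q p := by
  induction h with
  | refl p => exact ⟨.refl p, .refl p⟩
  | symm _ ih => exact ih.symm
  | trans _ _ ihpq ihqr => exact ⟨ihpq.1.trans ihqr.1, ihqr.2.trans ihpq.2⟩
  | parComm p q => exact ⟨.par_comm p q, .par_comm q p⟩
  | parAssoc p q r => exact ⟨.par_assoc p q r, .par_assoc_symm p q r⟩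
  | parNil p => exact ⟨.par_nil p, fun _ _ hp => ⟨_, .parL _ hp, (EqD.parNil _).symm⟩⟩
  | distr a p n => exact ⟨.pre_reps a p n, .reps_pre a p n⟩
  | congPre a h => exact ⟨.pre a h, .pre a h.symm⟩
  | congPar hp hq ihp ihq =>
    exact ⟨.par hp hq ihp.1 ihq.1, .par hp.symm hq.symm ihp.2 ihq.2⟩
  | congRepl a h => exact ⟨.repl a h, .repl a h.symm⟩

theorem EqD.bisim {p q : Proc A} (h : EqD p q) : Bisim p q :=
  ⟨EqD, ⟨fun _ _ => EqD.symm, fun _ _ h => h.isMatchedBy_and_isMatchedBy.1⟩, h⟩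

/-! ### The monoid of behaviours -/

/-- Bisimilarity as an equivalence relation on processes. -/
def bisimSetoid (A : Type) : Setoid (Proc A) :=
  ⟨Bisim, Bisim.refl, Bisim.symm, Bisim.trans⟩

/-- A behaviour is a process up to bisimilarity. Behaviours form a commutative monoid under
parallel composition. -/
def Behaviour (A : Type) : Type :=
  Quotient (bisimSetoid A)

/-- The bisimilarity class of a process. -/
def Proc.behaviour (p : Proc A) : Behaviour A :=
  Quotient.mk _ p

theorem behaviour_eq_iff {p q : Proc A} : p.behaviour = q.behaviour ↔ Bisim p q :=
  Quotient.eq (r := bisimSetoid A)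

namespace Behaviour

theorem exists_rep (x : Behaviour A) : ∃ p : Proc A, p.behaviour = x :=
  Quotient.exists_rep x

instance : Zero (Behaviour A) :=
  ⟨Proc.nil.behaviour⟩

instance : Add (Behaviour A) :=
  ⟨Quotient.map₂ Proc.par fun _ _ hp _ _ hq => hp.par hq⟩

instance : AddCommMonoid (Behaviour A) where
  add_assoc := by
    rintro ⟨p⟩ ⟨q⟩ ⟨r⟩
    exact Quotient.sound (EqD.parAssoc p q r).bisim
  zero_add := by
    rintro ⟨p⟩
    exact Quotient.sound ((EqD.parComm .nil p).trans (.parNil p)).bisim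
  add_zero := by
    rintro ⟨p⟩
    exact Quotient.sound (EqD.parNil p).bisim
  add_comm := by
    rintro ⟨p⟩ ⟨q⟩
    exact Quotient.sound (EqD.parComm p q).bisim
  nsmul := nsmulRec

/-- Prefixing on behaviours. -/
def pre (a : A) : Behaviour A → Behaviour A :=
  Quotient.map (Proc.pre a) fun _ _ h => h.pre a

/-- The transitions of a behaviour: those of any of its representatives. -/
def Step (x : Behaviour A) (a : A) (y : Behaviour A) : Prop :=
  ∃ p p' : Proc A, p.behaviour = x ∧ p'.behaviour = y ∧ CCS.Step p a p'

end Behaviour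

@[simp]
theorem behaviour_nil : (Proc.nil : Proc A).behaviour = 0 := rfl

@[simp]
theorem behaviour_par (p q : Proc A) : (Proc.par p q).behaviour = p.behaviour + q.behaviour := rfl

@[simp]
theorem behaviour_pre (a : A) (p : Proc A) : (Proc.pre a p).behaviour = p.behaviour.pre a := rfl

theorem step_behaviour_iff {p : Proc A} {a : A} {y : Behaviour A} :
    p.behaviour.Step a y ↔ ∃ p', Step p a p' ∧ p'.behaviour = y := by
  constructor
  · rintro ⟨q, q', hqp, rfl, hq⟩
    obtain ⟨p', hp, hqp'⟩ := (behaviour_eq_iff.1 hqp).step hq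
    exact ⟨p', hp, behaviour_eq_iff.2 hqp'.symm⟩
  · rintro ⟨p', hp, rfl⟩
    exact ⟨p, p', rfl, rfl, hp⟩

namespace Behaviour

variable {a b : A} {x y z : Behaviour A}

theorem not_step_zero : ¬ (0 : Behaviour A).Step a x := by
  rw [← behaviour_nil, step_behaviour_iff]
  rintro ⟨_, h, -⟩
  exact CCS.not_step_nil h

theorem step_pre_iff : (pre a x).Step b y ↔ b = a ∧ y = x := by
  obtain ⟨p, rfl⟩ := x.exists_rep
  simp only [← behaviour_pre, step_behaviour_iff, CCS.step_pre_iff]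
  grind

theorem step_add_iff :
    (x + y).Step a z ↔ (∃ x', x.Step a x' ∧ z = x' + y) ∨ ∃ y', y.Step a y' ∧ z = x + y' := by
  obtain ⟨p, rfl⟩ := x.exists_rep
  obtain ⟨q, rfl⟩ := y.exists_rep
  simp only [← behaviour_par, step_behaviour_iff, CCS.step_par_iff]
  grind [behaviour_par]

theorem Step.add_right {x' : Behaviour A} (h : x.Step a x') (y : Behaviour A) :
    (x + y).Step a (x' + y) :=
  step_add_iff.2 (.inl ⟨x', h, rfl⟩)

theorem Step.add_left {y' : Behaviour A} (h : y.Step a y') (x : Behaviour A) :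
    (x + y).Step a (x + y') :=
  step_add_iff.2 (.inr ⟨y', h, rfl⟩)

theorem step_pre : (pre a x).Step a x :=
  step_pre_iff.2 ⟨rfl, rfl⟩

theorem eq_of_bisim_upTo_eqvGen {R : Behaviour A → Behaviour A → Prop}
    (hfwd : ∀ ⦃x y⦄, R x y → ∀ a x', x.Step a x' → ∃ y', y.Step a y' ∧ Relation.EqvGen R x' y')
    (hbwd : ∀ ⦃x y⦄, R x y → ∀ a y', y.Step a y' → ∃ x', x.Step a x' ∧ Relation.EqvGen R x' y')
    (h : R x y) : x = y := by
  have hprogress {x y} (h : Relation.EqvGen R x y) :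
      (∀ a x', x.Step a x' → ∃ y', y.Step a y' ∧ Relation.EqvGen R x' y') ∧
        ∀ a y', y.Step a y' → ∃ x', x.Step a x' ∧ Relation.EqvGen R x' y' := by
    induction h with
    | rel x y h => exact ⟨hfwd h, hbwd h⟩
    | refl x => exact ⟨fun a x' h => ⟨x', h, .refl _⟩, fun a x' h => ⟨x', h, .refl _⟩⟩
    | symm x y _ ih =>
      exact ⟨fun a y' h => (ih.2 a y' h).imp fun _ => .imp_right (.symm _ _),
        fun a x' h => (ih.1 a x' h).imp fun _ => .imp_right (.symm _ _)⟩
    | trans x y z _ _ ihxy ihyz =>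
      refine ⟨fun a x' hx => ?_, fun a z' hz => ?_⟩
      · obtain ⟨y', hy, hxy⟩ := ihxy.1 a x' hx
        obtain ⟨z', hz, hyz⟩ := ihyz.1 a y' hy
        exact ⟨z', hz, hxy.trans _ _ _ hyz⟩
      · obtain ⟨y', hy, hyz⟩ := ihyz.2 a z' hz
        obtain ⟨x', hx, hxy⟩ := ihxy.2 a y' hy
        exact ⟨x', hx, hxy.trans _ _ _ hyz⟩
  obtain ⟨p, rfl⟩ := x.exists_rep
  obtain ⟨q, rfl⟩ := y.exists_rep
  refine behaviour_eq_iff.2 ⟨fun p q => Relation.EqvGen R p.behaviour q.behaviour,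
    ⟨fun _ _ => .symm _ _, fun p q hpq a p' hp => ?_⟩, .rel _ _ h⟩
  obtain ⟨_, hstep, hpq'⟩ := (hprogress hpq).1 a _ (step_behaviour_iff.2 ⟨p', hp, rfl⟩)
  obtain ⟨q', hq, rfl⟩ := step_behaviour_iff.1 hstep
  exact ⟨q', hq, hpq'⟩

theorem ext_step (h : ∀ a z, x.Step a z ↔ y.Step a z) : x = y := by
  refine eq_of_bisim_upTo_eqvGen (R := fun x' y' => x' = x ∧ y' = y) ?_ ?_ ⟨rfl, rfl⟩
  · rintro _ _ ⟨rfl, rfl⟩ a z hz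
    exact ⟨z, (h a z).1 hz, .refl _⟩
  · rintro _ _ ⟨rfl, rfl⟩ a z hz
    exact ⟨z, (h a z).2 hz, .refl _⟩

theorem pre_inj : pre a x = pre b y ↔ a = b ∧ x = y := by
  refine ⟨fun h => ?_, fun ⟨ha, hx⟩ => ha ▸ hx ▸ rfl⟩
  exact step_pre_iff.1 (h ▸ step_pre)

end Behaviour

/-! ### Finite behaviours -/

theorem Step.isFin {p p' : Proc A} {a : A} (h : Step p a p') (hp : p.IsFin) : p'.IsFin := by
  induction h with
  | pre => exact hp
  | repl => exact hp.elim
  | parL q _ ih => exact ⟨ih hp.1, hp.2⟩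
  | parR q _ ih => exact ⟨hp.1, ih hp.2⟩

theorem Step.size_add_one {p p' : Proc A} {a : A} (h : Step p a p') (hp : p.IsFin) :
    p'.size + 1 = p.size := by
  induction h with
  | pre => rfl
  | repl => exact hp.elim
  | parL q _ ih => simp only [Proc.size, ← ih hp.1]; omega
  | parR q _ ih => simp only [Proc.size, ← ih hp.2]; omega

theorem exists_step_of_size_ne_zero {p : Proc A} (hp : p.size ≠ 0) : ∃ a p', Step p a p' := by
  induction p with
  | nil => exact absurd rfl hp
  | pre a p => exact ⟨a, p, .pre⟩
  | repl a p => exact ⟨a, _, .repl⟩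
  | par p q ihp ihq =>
    by_cases h : p.size = 0
    · obtain ⟨a, q', hq⟩ := ihq (by simpa [Proc.size, h] using hp)
      exact ⟨a, _, .parR p hq⟩
    · obtain ⟨a, p', hp⟩ := ihp h
      exact ⟨a, _, .parL q hp⟩

theorem eqD_nil_of_size_eq_zero {p : Proc A} (hp : p.size = 0) : EqD p .nil := by
  induction p with
  | nil => exact .refl _
  | pre a p => exact absurd hp (Nat.succ_ne_zero _)
  | repl a p => exact absurd hp (Nat.succ_ne_zero _)
  | par p q ihp ihq =>
    obtain ⟨hp, hq⟩ := Nat.add_eq_zero_iff.1 hp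
    exact (EqD.congPar (ihp hp) (ihq hq)).trans (.parNil _)

theorem Bisim.size_eq {p q : Proc A} (h : Bisim p q) (hp : p.IsFin) (hq : q.IsFin) :
    p.size = q.size := by
  induction hn : p.size generalizing p q with
  | zero =>
    by_contra hne
    obtain ⟨a, q', hq'⟩ := exists_step_of_size_ne_zero (Ne.symm hne)
    obtain ⟨p', hp', -⟩ := h.symm.step hq'
    have := hp'.size_add_one hp
    omega
  | succ n ih =>
    obtain ⟨a, p', hp'⟩ := exists_step_of_size_ne_zero (p := p) (by omega)
    obtain ⟨q', hq', h'⟩ := h.step hp'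
    have hp_size := hp'.size_add_one hp
    have hq_size := hq'.size_add_one hq
    have := ih h' (hp'.isFin hp) (hq'.isFin hq) (by omega)
    omega

/-- The submonoid of the behaviours of finite processes. -/
def finiteBehaviours (A : Type) : AddSubmonoid (Behaviour A) where
  carrier := {x | ∃ p : Proc A, p.IsFin ∧ p.behaviour = x}
  zero_mem' := ⟨.nil, trivial, rfl⟩
  add_mem' := by
    rintro _ _ ⟨p, hp, rfl⟩ ⟨q, hq, rfl⟩
    exact ⟨.par p q, ⟨hp, hq⟩, rfl⟩

theorem Proc.IsFin.behaviour_mem {p : Proc A} (hp : p.IsFin) : p.behaviour ∈ finiteBehaviours A :=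
  ⟨p, hp, rfl⟩

theorem Behaviour.Step.mem_finiteBehaviours {x y : Behaviour A} {a : A} (h : x.Step a y)
    (hx : x ∈ finiteBehaviours A) : y ∈ finiteBehaviours A := by
  obtain ⟨p, hp, rfl⟩ := hx
  obtain ⟨p', hp', rfl⟩ := step_behaviour_iff.1 h
  exact (hp'.isFin hp).behaviour_mem

/-- Finite processes, as a subtype. -/
abbrev FinProc (A : Type) : Type :=
  {p : Proc A // p.IsFin}

namespace FiniteBehaviour

/-- The class of a finite process in the submonoid of finite behaviours. -/
def mk (p : FinProc A) : finiteBehaviours A :=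
  ⟨p.1.behaviour, p.2.behaviour_mem⟩

theorem mk_surjective : Function.Surjective (mk : FinProc A → finiteBehaviours A) := by
  rintro ⟨_, p, hp, rfl⟩
  exact ⟨⟨p, hp⟩, rfl⟩

theorem mk_eq_mk_iff {p q : FinProc A} : mk p = mk q ↔ Bisim p.1 q.1 :=
  Subtype.ext_iff.trans behaviour_eq_iff

/-- The size of a finite behaviour, which is the common size of its finite representatives. -/
noncomputable def size : finiteBehaviours A →+ ℕ where
  toFun x := (Function.surjInv mk_surjective x).1.size
  map_zero' :=
    (mk_eq_mk_iff (q := ⟨.nil, trivial⟩).1 (Function.surjInv_eq mk_surjective 0)).size_eq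
      (Subtype.prop _) trivial
  map_add' x y := by
    let rep := Function.surjInv (mk_surjective (A := A))
    have hrep : ∀ z, mk (rep z) = z := Function.surjInv_eq mk_surjective
    have hmk : mk (rep (x + y)) = mk ⟨.par (rep x).1 (rep y).1, (rep x).2, (rep y).2⟩ :=
      calc mk (rep (x + y)) = mk (rep x) + mk (rep y) := by rw [hrep, hrep, hrep]
        _ = mk ⟨.par (rep x).1 (rep y).1, (rep x).2, (rep y).2⟩ := rfl
    exact (mk_eq_mk_iff.1 hmk).size_eq (rep (x + y)).2 ⟨(rep x).2, (rep y).2⟩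

theorem size_mk (p : FinProc A) : size (mk p) = p.1.size :=
  (mk_eq_mk_iff.1 (Function.surjInv_eq mk_surjective (mk p))).size_eq (Subtype.prop _) p.2

/-- Prefixing on finite behaviours. -/
def pre (a : A) (x : finiteBehaviours A) : finiteBehaviours A :=
  ⟨x.1.pre a, by obtain ⟨_, p, hp, rfl⟩ := x; exact ⟨.pre a p, hp, rfl⟩⟩

theorem isInterleaving :
    IsInterleaving (size (A := A)) fun x y => ∃ a, (x : Behaviour A).Step a y where
  size_lt {x y} := by
    rintro ⟨a, h⟩
    obtain ⟨p, rfl⟩ := mk_surjective x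
    obtain ⟨p', hp', hy⟩ := step_behaviour_iff.1 h
    obtain rfl : mk ⟨p', hp'.isFin p.2⟩ = y := Subtype.ext hy
    rw [size_mk, size_mk, ← hp'.size_add_one p.2]
    exact Nat.lt_succ_self _
  exists_step {x} hx := by
    obtain ⟨p, rfl⟩ := mk_surjective x
    have hsize : p.1.size ≠ 0 := fun h0 =>
      hx (mk_eq_mk_iff (q := ⟨.nil, trivial⟩).2 (eqD_nil_of_size_eq_zero h0).bisim)
    obtain ⟨a, p', hp'⟩ := exists_step_of_size_ne_zero hsize
    exact ⟨mk ⟨p', hp'.isFin p.2⟩, a, step_behaviour_iff.2 ⟨p', hp', rfl⟩⟩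
  step_add_iff {x y z} := by
    constructor
    · rintro ⟨a, h⟩
      rcases Behaviour.step_add_iff.1 h with ⟨x', hx, hz⟩ | ⟨y', hy, hz⟩
      · exact .inl ⟨⟨x', hx.mem_finiteBehaviours x.2⟩, ⟨a, hx⟩, Subtype.ext hz⟩
      · exact .inr ⟨⟨y', hy.mem_finiteBehaviours y.2⟩, ⟨a, hy⟩, Subtype.ext hz⟩
    · rintro (⟨x', ⟨a, hx⟩, rfl⟩ | ⟨y', ⟨a, hy⟩, rfl⟩)
      · exact ⟨a, hx.add_right y⟩
      · exact ⟨a, hy.add_left x⟩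

theorem exists_irreducible_pre (a : A) (x : finiteBehaviours A) :
    ∃ (g : finiteBehaviours A) (n : ℕ), AddIrreducible (pre a g) ∧ x = g + n • pre a g := by
  have hunique : ∀ y : finiteBehaviours A,
      (∃ b, (pre a x : Behaviour A).Step b y) ↔ y = x := fun y => by
    simp only [pre, Behaviour.step_pre_iff, exists_eq_left, Subtype.ext_iff]
  obtain ⟨p, g, n, hirr, hx, rfl, hp⟩ := isInterleaving.exists_eq_nsmul_of_unique_step hunique
  have hlabel {b : A} {z : Behaviour A} (hz : (p : Behaviour A).Step b z) : b = a := by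
    have hz' := hz.add_right (n • p : finiteBehaviours A)
    rw [← AddSubmonoid.coe_add, ← hx] at hz'
    exact (Behaviour.step_pre_iff.1 hz').1
  have hp_eq : p = pre a g := by
    refine Subtype.ext (Behaviour.ext_step fun b z => ?_)
    rw [pre, Behaviour.step_pre_iff]
    constructor
    · intro hz
      exact ⟨hlabel hz,
        congrArg Subtype.val ((hp ⟨z, hz.mem_finiteBehaviours p.2⟩).1 ⟨b, hz⟩)⟩
    · rintro ⟨rfl, rfl⟩
      obtain ⟨c, hc⟩ := (hp g).2 rfl
      exact hlabel hc ▸ hc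
  exact ⟨g, n, hp_eq ▸ hirr, by rw [hp_eq]⟩

end FiniteBehaviour

/-! ### Completeness of `≡D` for finite processes -/

/-- `≡D` as an equivalence relation on processes. -/
def eqDSetoid (A : Type) : Setoid (Proc A) :=
  ⟨EqD, EqD.refl, EqD.symm, EqD.trans⟩

/-- Processes up to `≡D`, a commutative monoid under parallel composition. -/
def EqDClass (A : Type) : Type :=
  Quotient (eqDSetoid A)

/-- The class of a process modulo `≡D`. -/
def Proc.eqDClass (p : Proc A) : EqDClass A :=
  Quotient.mk _ p

theorem eqDClass_eq_iff {p q : Proc A} : p.eqDClass = q.eqDClass ↔ EqD p q :=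
  Quotient.eq (r := eqDSetoid A)

namespace EqDClass

instance : Zero (EqDClass A) :=
  ⟨Proc.nil.eqDClass⟩

instance : Add (EqDClass A) :=
  ⟨Quotient.map₂ Proc.par fun _ _ hp _ _ hq => EqD.congPar hp hq⟩

instance : AddCommMonoid (EqDClass A) where
  add_assoc := by
    rintro ⟨p⟩ ⟨q⟩ ⟨r⟩
    exact Quotient.sound (EqD.parAssoc p q r)
  zero_add := by
    rintro ⟨p⟩
    exact Quotient.sound ((EqD.parComm .nil p).trans (.parNil p))
  add_zero := by
    rintro ⟨p⟩
    exact Quotient.sound (EqD.parNil p)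
  add_comm := by
    rintro ⟨p⟩ ⟨q⟩
    exact Quotient.sound (EqD.parComm p q)
  nsmul := nsmulRec

/-- The canonical map `Proc / ≡D → Proc / ~`. -/
def toBehaviour : EqDClass A →+ Behaviour A where
  toFun := Quotient.map id fun _ _ => EqD.bisim
  map_zero' := rfl
  map_add' := by
    rintro ⟨p⟩ ⟨q⟩
    rfl

end EqDClass

theorem toBehaviour_eqDClass (p : Proc A) : p.eqDClass.toBehaviour = p.behaviour := rfl

theorem eqDClass_par (p q : Proc A) : (Proc.par p q).eqDClass = p.eqDClass + q.eqDClass := rfl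

theorem eqDClass_reps (n : ℕ) (p : Proc A) : (Proc.reps n p).eqDClass = n • p.eqDClass := by
  induction n with
  | zero => rw [zero_nsmul]; rfl
  | succ n ih => rw [Proc.reps, eqDClass_par, ih, succ_nsmul']

theorem behaviour_reps (n : ℕ) (p : Proc A) : (Proc.reps n p).behaviour = n • p.behaviour := by
  rw [← toBehaviour_eqDClass, eqDClass_reps, map_nsmul, toBehaviour_eqDClass]

theorem Proc.IsFin.reps {p : Proc A} (hp : p.IsFin) (n : ℕ) : (Proc.reps n p).IsFin := by
  induction n with
  | zero => trivial
  | succ n ih => exact ⟨hp, ih⟩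

/-- `≡D` is complete for bisimilarity of finite processes of size less than `n`. -/
def CompleteBelow (A : Type) (n : ℕ) : Prop :=
  ∀ ⦃p q : Proc A⦄, p.IsFin → q.IsFin → p.size < n → Bisim p q → EqD p q

/-- A prefixed finite process whose behaviour is irreducible. -/
def IsPrimePrefix (q : FinProc A) : Prop :=
  (∃ a r, q.1 = .pre a r) ∧ AddIrreducible (FiniteBehaviour.mk q)

namespace CompleteBelow

variable {n : ℕ}

theorem exists_eqDClass_pre_eq_nsmul (h : CompleteBelow A n) (a : A) {p : Proc A} (hp : p.IsFin)
    (hsize : p.size < n) :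
    ∃ (q : FinProc A) (m : ℕ), IsPrimePrefix q ∧
      (Proc.pre a p).eqDClass = m • q.1.eqDClass := by
  obtain ⟨g, m, hirr, hg⟩ := FiniteBehaviour.exists_irreducible_pre a (FiniteBehaviour.mk ⟨p, hp⟩)
  obtain ⟨⟨r, hr⟩, rfl⟩ := FiniteBehaviour.mk_surjective g
  refine ⟨⟨.pre a r, hr⟩, m + 1, ⟨⟨a, r, rfl⟩, hirr⟩, ?_⟩
  have hr' : (Proc.pre a r).IsFin := hr
  have hbisim : Bisim p (.par r (.reps m (.pre a r))) := by
    rw [← behaviour_eq_iff, behaviour_par, behaviour_reps]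
    exact congrArg Subtype.val hg
  have heqD := h hp (q := .par _ _) ⟨hr, hr'.reps m⟩ hsize hbisim
  rw [← eqDClass_reps, eqDClass_eq_iff]
  exact (heqD.congPre a).trans (.distr a r m hr)

theorem exists_components (h : CompleteBelow A n) {p : Proc A} (hp : p.IsFin)
    (hsize : p.size ≤ n) :
    ∃ s : Multiset (FinProc A), (∀ q ∈ s, IsPrimePrefix q) ∧
      p.eqDClass = (s.map fun q => q.1.eqDClass).sum := by
  induction p with
  | nil => exact ⟨0, by simp, rfl⟩
  | pre a p =>
    obtain ⟨q, m, hq, heq⟩ := h.exists_eqDClass_pre_eq_nsmul a (p := p) hp hsize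
    refine ⟨.replicate m q, fun _ hr => Multiset.eq_of_mem_replicate hr ▸ hq, ?_⟩
    rw [heq, Multiset.map_replicate, Multiset.sum_replicate]
  | repl a p => exact hp.elim
  | par p q ihp ihq =>
    obtain ⟨s, hs, hps⟩ := ihp hp.1 (le_of_add_le_left hsize)
    obtain ⟨t, ht, hqt⟩ := ihq hp.2 (le_of_add_le_right hsize)
    refine ⟨s + t, fun r hr => (Multiset.mem_add.1 hr).elim (hs r) (ht r), ?_⟩
    rw [eqDClass_par, hps, hqt, Multiset.map_add, Multiset.sum_add]

theorem eqD_of_bisim_primePrefix (h : CompleteBelow A n) {p q : FinProc A} (hp : IsPrimePrefix p)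
    (hq : IsPrimePrefix q) (hsize : p.1.size ≤ n) (hpq : Bisim p.1 q.1) : EqD p.1 q.1 := by
  obtain ⟨⟨p, hpfin⟩, ⟨q, hqfin⟩⟩ := p, q
  obtain ⟨⟨a, p, rfl⟩, -⟩ := hp
  obtain ⟨⟨b, q, rfl⟩, -⟩ := hq
  rw [← behaviour_eq_iff, behaviour_pre, behaviour_pre, Behaviour.pre_inj, behaviour_eq_iff] at hpq
  obtain ⟨rfl, hpq⟩ := hpq
  exact .congPre a (h hpfin hqfin hsize hpq)

end CompleteBelow

theorem sum_map_mk_of_eqDClass_eq {p : FinProc A} {s : Multiset (FinProc A)}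
    (h : p.1.eqDClass = (s.map fun q => q.1.eqDClass).sum) :
    (s.map FiniteBehaviour.mk).sum = FiniteBehaviour.mk p := by
  refine Subtype.ext ?_
  have hsum := congrArg EqDClass.toBehaviour h
  rw [map_multiset_sum, Multiset.map_map] at hsum
  rw [AddSubmonoid.coe_multiset_sum, Multiset.map_map]
  exact hsum.symm

theorem Bisim.eqD {p q : Proc A} (h : Bisim p q) (hp : p.IsFin) (hq : q.IsFin) : EqD p q := by
  induction hn : p.size using Nat.strong_induction_on generalizing p q with
  | _ n ih =>
    have hcomplete : CompleteBelow A n := fun _ _ hp hq hlt h => ih _ hlt h hp hq rfl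
    obtain ⟨s, hs, hps⟩ := hcomplete.exists_components hp hn.le
    obtain ⟨t, ht, hqt⟩ := hcomplete.exists_components hq (h.size_eq hp hq ▸ hn.le)
    have hs_sum := sum_map_mk_of_eqDClass_eq (p := ⟨p, hp⟩) hps
    have ht_sum := sum_map_mk_of_eqDClass_eq (p := ⟨q, hq⟩) hqt
    have hmk : s.map FiniteBehaviour.mk = t.map FiniteBehaviour.mk :=
      FiniteBehaviour.isInterleaving.factorization_unique
        (Multiset.forall_mem_map_iff.2 fun r hr => (hs r hr).2)
        (Multiset.forall_mem_map_iff.2 fun r hr => (ht r hr).2)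
        (by rw [hs_sum, ht_sum]; exact FiniteBehaviour.mk_eq_mk_iff.2 h)
    have hsize : ∀ r ∈ s, r.1.size ≤ n := fun r hr => by
      have hle := size_le_size_sum_of_mem FiniteBehaviour.size
        (Multiset.mem_map_of_mem FiniteBehaviour.mk hr)
      rwa [hs_sum, FiniteBehaviour.size_mk, FiniteBehaviour.size_mk, hn] at hle
    have hclass : (s.map fun r => r.1.eqDClass) = t.map fun r => r.1.eqDClass := by
      rw [← Multiset.rel_eq, Multiset.rel_map] at hmk ⊢
      refine hmk.mono fun r hr r' hr' hrr' => eqDClass_eq_iff.2 ?_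
      exact hcomplete.eqD_of_bisim_primePrefix (hs r hr) (ht r' hr') (hsize r hr)
        (FiniteBehaviour.mk_eq_mk_iff.1 hrr')
    rw [← eqDClass_eq_iff, hps, hqt, hclass]

/-! ### Equality in the presence of a replicating behaviour -/

namespace Behaviour

/-- Every transition of `s` leaves `s` in place and spawns something in parallel, as is the case
for the processes `∏ᵢ !αᵢ.Sᵢ`. -/
def IsReplicating (s : Behaviour A) : Prop :=
  ∀ ⦃a y⦄, s.Step a y → ∃ g, y = s + g

namespace IsReplicating

variable {s x y : Behaviour A} {a : A}

theorem exists_eq_add (hs : s.IsReplicating) (h : (s + x).Step a y) : ∃ g, y = s + g := by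
  rcases step_add_iff.1 h with ⟨s', hs', rfl⟩ | ⟨x', -, rfl⟩
  · obtain ⟨g, rfl⟩ := hs hs'
    exact ⟨g + x, add_assoc _ _ _⟩
  · exact ⟨x', rfl⟩

theorem add_eq_add_of_step (hs : s.IsReplicating)
    (hx : ∀ a x', x.Step a x' → (s + y).Step a (s + x'))
    (hy : ∀ a y', y.Step a y' → (s + x).Step a (s + y')) : s + x = s + y := by
  refine eq_of_bisim_upTo_eqvGen (R := fun u v => ∃ c, u = s + c + x ∧ v = s + c + y) ?_ ?_
    ⟨0, by rw [add_zero], by rw [add_zero]⟩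
  · rintro _ _ ⟨c, rfl, rfl⟩ a u hu
    rcases step_add_iff.1 hu with ⟨_, hc, rfl⟩ | ⟨x', hx', rfl⟩
    · obtain ⟨c', rfl⟩ := hs.exists_eq_add hc
      exact ⟨_, hc.add_right y, .rel _ _ ⟨c', rfl, rfl⟩⟩
    · refine ⟨s + c + x', ?_, .refl _⟩
      rw [add_right_comm, add_right_comm s c]
      exact (hx a x' hx').add_right c
  · rintro _ _ ⟨c, rfl, rfl⟩ a v hv
    rcases step_add_iff.1 hv with ⟨_, hc, rfl⟩ | ⟨y', hy', rfl⟩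
    · obtain ⟨c', rfl⟩ := hs.exists_eq_add hc
      exact ⟨_, hc.add_right x, .rel _ _ ⟨c', rfl, rfl⟩⟩
    · refine ⟨s + c + y', ?_, .refl _⟩
      rw [add_right_comm, add_right_comm s c]
      exact (hy a y' hy').add_right c

theorem add_pre_eq_add_pre (hs : s.IsReplicating) (a : A) (h : s + x = s + y) :
    s + pre a x = s + pre a y := by
  refine hs.add_eq_add_of_step (fun b x' hx' => ?_) fun b y' hy' => ?_
  · obtain ⟨rfl, rfl⟩ := step_pre_iff.1 hx'
    exact h ▸ step_pre.add_left s
  · obtain ⟨rfl, rfl⟩ := step_pre_iff.1 hy'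
    exact h ▸ step_pre.add_left s

/-- When `x` moves to `x'`, `s = s + (x + y)` answers with `s + (x' + y)`, so that `y` takes over
the role of `x`. -/
theorem add_eq_self_of_add_add_eq_self (hs : s.IsReplicating) (h : s + (x + y) = s) :
    s + x = s := by
  let R (u v : Behaviour A) : Prop := ∃ c y z, s + (y + z) = s ∧ u = s + c + y ∧ v = s + c
  refine eq_of_bisim_upTo_eqvGen (R := R) ?_ ?_ ⟨0, x, y, h, by rw [add_zero], by rw [add_zero]⟩
  · rintro _ _ ⟨c, y, z, habs, rfl, rfl⟩ a u hu
    rcases step_add_iff.1 hu with ⟨_, hc, rfl⟩ | ⟨y', hy', rfl⟩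
    · obtain ⟨c', rfl⟩ := hs.exists_eq_add hc
      exact ⟨_, hc, .rel _ _ ⟨c', y, z, habs, rfl, rfl⟩⟩
    · have hmove : s.Step a (s + (y' + z)) := by
        have := (hy'.add_right z).add_left s
        rwa [habs] at this
      refine ⟨_, hmove.add_right c, .symm _ _ (.rel _ _ ⟨c + y', z, y, ?_, ?_, ?_⟩)⟩
      · rwa [add_comm z]
      · abel
      · abel
  · rintro _ _ ⟨c, y, z, habs, rfl, rfl⟩ a v hv
    obtain ⟨c', rfl⟩ := hs.exists_eq_add hv
    exact ⟨_, hv.add_right y, .rel _ _ ⟨c', y, z, habs, rfl, rfl⟩⟩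

end IsReplicating

end Behaviour

theorem step_behaviour_repl_iff {a b : A} {p : Proc A} {y : Behaviour A} :
    (Proc.repl a p).behaviour.Step b y ↔
      b = a ∧ y = (Proc.repl a p).behaviour + p.behaviour := by
  simp only [step_behaviour_iff, step_repl_iff, ← behaviour_par]
  grind

theorem repl_add_eq_repl_add {a : A} {p q : Proc A} {t : Behaviour A} (ht : t.IsReplicating)
    (h : (Proc.repl a p).behaviour + t + p.behaviour =
      (Proc.repl a p).behaviour + t + q.behaviour) :
    (Proc.repl a p).behaviour + t = (Proc.repl a q).behaviour + t := by
  set r := (Proc.repl a p).behaviour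
  set r' := (Proc.repl a q).behaviour
  have hspawn (c) : r + p.behaviour + (t + c) = r + (t + (c + q.behaviour)) := by
    calc r + p.behaviour + (t + c) = r + t + p.behaviour + c := by abel
      _ = r + (t + (c + q.behaviour)) := by rw [h]; abel
  have hspawn' (c) : r' + q.behaviour + (t + c) = r' + (t + (c + q.behaviour)) := by abel
  let R (u v : Behaviour A) : Prop := ∃ c, u = r + (t + c) ∧ v = r' + (t + c)
  refine Behaviour.eq_of_bisim_upTo_eqvGen (R := R) ?_ ?_
    ⟨0, by rw [add_zero], by rw [add_zero]⟩
  · rintro _ _ ⟨c, rfl, rfl⟩ b u hu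
    rcases Behaviour.step_add_iff.1 hu with ⟨_, hr, rfl⟩ | ⟨_, hc, rfl⟩
    · obtain ⟨rfl, rfl⟩ := step_behaviour_repl_iff.1 hr
      exact ⟨_, (step_behaviour_repl_iff.2 ⟨rfl, rfl⟩).add_right _,
        .rel _ _ ⟨_, hspawn c, hspawn' c⟩⟩
    · obtain ⟨c', rfl⟩ := ht.exists_eq_add hc
      exact ⟨_, hc.add_left r', .rel _ _ ⟨c', rfl, rfl⟩⟩
  · rintro _ _ ⟨c, rfl, rfl⟩ b v hv
    rcases Behaviour.step_add_iff.1 hv with ⟨_, hr', rfl⟩ | ⟨_, hc, rfl⟩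
    · obtain ⟨rfl, rfl⟩ := step_behaviour_repl_iff.1 hr'
      exact ⟨_, (step_behaviour_repl_iff.2 ⟨rfl, rfl⟩).add_right _,
        .rel _ _ ⟨_, hspawn c, hspawn' c⟩⟩
    · obtain ⟨c', rfl⟩ := ht.exists_eq_add hc
      exact ⟨_, hc.add_left r, .rel _ _ ⟨c', rfl, rfl⟩⟩

/-! ### Absorption-free processes -/

/-- No prefixed subterm of the finite process is absorbed by `s`. -/
def AbsorptionFree (s : Behaviour A) : Proc A → Prop
  | .nil => True
  | .pre a p => s + p.behaviour.pre a ≠ s ∧ AbsorptionFree s p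
  | .par p q => AbsorptionFree s p ∧ AbsorptionFree s q
  | .repl _ _ => False

namespace AbsorptionFree

variable {s : Behaviour A} {p q : Proc A}

theorem isFin (hp : AbsorptionFree s p) : p.IsFin := by
  induction p with
  | nil => trivial
  | pre a p ih => exact ih hp.2
  | par p q ihp ihq => exact ⟨ihp hp.1, ihq hp.2⟩
  | repl a p => exact hp.elim

theorem step {p' : Proc A} {a : A} (hp : AbsorptionFree s p) (h : Step p a p') :
    AbsorptionFree s p' := by
  induction h with
  | pre => exact hp.2
  | repl => exact hp.elim
  | parL q _ ih => exact ⟨ih hp.1, hp.2⟩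
  | parR q _ ih => exact ⟨hp.1, ih hp.2⟩

theorem size_eq_zero_of_add_eq_self (hs : s.IsReplicating) (hp : AbsorptionFree s p)
    (h : s + p.behaviour = s) : p.size = 0 := by
  induction p with
  | nil => rfl
  | pre a p => exact absurd h hp.1
  | par p q ihp ihq =>
    rw [behaviour_par] at h
    have hp0 := ihp hp.1 (hs.add_eq_self_of_add_add_eq_self h)
    have hq0 := ihq hp.2 (hs.add_eq_self_of_add_add_eq_self (add_comm p.behaviour _ ▸ h))
    rw [Proc.size, hp0, hq0]
  | repl a p => exact hp.elim

theorem exists_size_lt_of_not (hs : s.IsReplicating) (hp : p.IsFin) (hfree : ¬ AbsorptionFree s p) :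
    ∃ q : Proc A, q.IsFin ∧ q.size < p.size ∧ s + q.behaviour = s + p.behaviour := by
  induction p with
  | nil => exact absurd trivial hfree
  | pre a p ih =>
    by_cases habs : s + p.behaviour.pre a = s
    · exact ⟨.nil, trivial, Nat.succ_pos _, by simpa using habs.symm⟩
    · obtain ⟨q, hq, hlt, heq⟩ := ih hp fun h => hfree ⟨habs, h⟩
      exact ⟨.pre a q, hq, Nat.succ_lt_succ hlt, hs.add_pre_eq_add_pre a heq⟩
  | par p q ihp ihq =>
    by_cases hpfree : AbsorptionFree s p
    · obtain ⟨q', hq', hlt, heq⟩ := ihq hp.2 fun h => hfree ⟨hpfree, h⟩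
      refine ⟨.par p q', ⟨hp.1, hq'⟩, Nat.add_lt_add_left hlt _, ?_⟩
      rw [behaviour_par, behaviour_par, add_left_comm, heq, add_left_comm]
    · obtain ⟨p', hp', hlt, heq⟩ := ihp hp.1 hpfree
      refine ⟨.par p' q, ⟨hp', hp.2⟩, Nat.add_lt_add_right hlt _, ?_⟩
      rw [behaviour_par, behaviour_par, ← add_assoc, heq, add_assoc]
  | repl a p => exact hp.elim

end AbsorptionFree

/-- A replicating behaviour all of whose spawned processes are absorption-free, as is the case for
seeds. -/
def IsReduced (s : Behaviour A) : Prop :=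
  ∀ ⦃a y⦄, s.Step a y → ∃ p : Proc A, AbsorptionFree s p ∧ y = s + p.behaviour

namespace IsReduced

variable {s : Behaviour A} {p q : Proc A}

theorem isReplicating (hs : IsReduced s) : s.IsReplicating := fun _ _ h =>
  have ⟨p, _, hp⟩ := hs h
  ⟨p.behaviour, hp⟩

theorem exists_matching (hs : IsReduced s) {p' : Proc A} {a : A} (hq : AbsorptionFree s q)
    (h : s + p.behaviour = s + q.behaviour) (hp' : Step p a p') :
    (∃ q', Step q a q' ∧ s + p'.behaviour = s + q'.behaviour) ∨
      ∃ r, AbsorptionFree s r ∧ q.size ≤ r.size ∧ s + p'.behaviour = s + r.behaviour := by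
  have hmove : (s + p.behaviour).Step a (s + p'.behaviour) :=
    (step_behaviour_iff.2 ⟨p', hp', rfl⟩).add_left s
  rw [h] at hmove
  rcases Behaviour.step_add_iff.1 hmove with ⟨_, hs', heq⟩ | ⟨_, hqmove, heq⟩
  · obtain ⟨c, hc, rfl⟩ := hs hs'
    refine .inr ⟨.par c q, ⟨hc, hq⟩, Nat.le_add_left _ _, ?_⟩
    rw [heq, behaviour_par, add_assoc]
  · obtain ⟨q', hq', rfl⟩ := step_behaviour_iff.1 hqmove
    exact .inl ⟨q', hq', heq⟩

theorem size_le (hs : IsReduced s) (hp : p.IsFin) (hq : AbsorptionFree s q)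
    (h : s + p.behaviour = s + q.behaviour) : q.size ≤ p.size := by
  induction hn : p.size generalizing p q with
  | zero =>
    have hp0 : p.behaviour = 0 := behaviour_eq_iff.2 (eqD_nil_of_size_eq_zero hn).bisim
    rw [hp0, add_zero] at h
    exact (hq.size_eq_zero_of_add_eq_self hs.isReplicating h.symm).le
  | succ n ih =>
    obtain ⟨a, p', hp'⟩ := exists_step_of_size_ne_zero (p := p) (by omega)
    have hp_size := hp'.size_add_one hp
    rcases hs.exists_matching hq h hp' with ⟨q', hq', heq⟩ | ⟨r, hr, hle, heq⟩
    · have hq_size := hq'.size_add_one hq.isFin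
      have := ih (hp'.isFin hp) (hq.step hq') heq (by omega)
      omega
    · have := ih (hp'.isFin hp) hr heq (by omega)
      omega

/-- A transition of `p` cannot be answered by `s`, since that would increase the size on the other
side, which is minimal. -/
theorem bisim_of_add_eq_add (hs : IsReduced s) (hp : AbsorptionFree s p) (hq : AbsorptionFree s q)
    (h : s + p.behaviour = s + q.behaviour) : Bisim p q := by
  refine ⟨fun p q => AbsorptionFree s p ∧ AbsorptionFree s q ∧ s + p.behaviour = s + q.behaviour,
    ⟨fun p q ⟨hp, hq, h⟩ => ⟨hq, hp, h.symm⟩, ?_⟩, hp, hq, h⟩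
  rintro p q ⟨hp, hq, h⟩ a p' hp'
  rcases hs.exists_matching hq h hp' with ⟨q', hq', heq⟩ | ⟨r, hr, hle, heq⟩
  · exact ⟨q', hq', hp.step hp', hq.step hq', heq⟩
  · have hp_size := hp'.size_add_one hp.isFin
    have hr_le := hs.size_le (hp.step hp').isFin hr heq
    have hp_le := hs.size_le hq.isFin hp h.symm
    omega

end IsReduced

/-! ### Seeds -/

namespace ReplOnly

variable {S : Proc A}

theorem wf (hS : ReplOnly S) : S.Wf := by
  induction S with
  | nil => trivial
  | pre a p => exact hS.elim
  | par p q ihp ihq => exact ⟨ihp hS.1, ihq hS.2⟩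
  | repl a p => exact hS

theorem step_behaviour_iff (hS : ReplOnly S) {a : A} {y : Behaviour A} :
    S.behaviour.Step a y ↔ ∃ G, TopRepl S a G ∧ y = S.behaviour + G.behaviour := by
  induction S generalizing y with
  | nil => exact ⟨fun h => absurd h Behaviour.not_step_zero, nofun⟩
  | pre a p => exact hS.elim
  | par p q ihp ihq =>
    simp only [behaviour_par, Behaviour.step_add_iff, ihp hS.1, ihq hS.2]
    constructor
    · rintro (⟨_, ⟨G, hG, rfl⟩, rfl⟩ | ⟨_, ⟨G, hG, rfl⟩, rfl⟩)
      · exact ⟨G, .parL q hG, add_right_comm _ _ _⟩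
      · exact ⟨G, .parR p hG, (add_assoc _ _ _).symm⟩
    · rintro ⟨G, _ | _ | _, rfl⟩
      · exact .inl ⟨_, ⟨G, ‹_›, rfl⟩, add_right_comm _ _ _⟩
      · exact .inr ⟨_, ⟨G, ‹_›, rfl⟩, add_assoc _ _ _⟩
  | repl a p =>
    rw [step_behaviour_repl_iff]
    constructor
    · rintro ⟨rfl, rfl⟩
      exact ⟨p, .repl _ p, rfl⟩
    · rintro ⟨_, ⟨⟩, rfl⟩
      exact ⟨rfl, rfl⟩

theorem isReplicating (hS : ReplOnly S) : S.behaviour.IsReplicating := fun _ _ h =>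
  have ⟨G, _, hG⟩ := hS.step_behaviour_iff.1 h
  ⟨G.behaviour, hG⟩

theorem isFin_of_topRepl (hS : ReplOnly S) {a : A} {G : Proc A} (hG : TopRepl S a G) :
    G.IsFin := by
  induction hG with
  | repl a p => exact hS
  | parL q _ ih => exact ih hS.1
  | parR p _ ih => exact ih hS.2

theorem exists_rest (hS : ReplOnly S) {a : A} {G : Proc A} (hG : TopRepl S a G) :
    ∃ T : Proc A, ReplOnly T ∧ S.behaviour = (Proc.repl a G).behaviour + T.behaviour ∧
      S.size = (Proc.repl a G).size + T.size := by
  induction hG with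
  | repl a p => exact ⟨.nil, trivial, (add_zero _).symm, rfl⟩
  | parL q _ ih =>
    obtain ⟨T, hT, heq, hsize⟩ := ih hS.1
    refine ⟨.par T q, ⟨hT, hS.2⟩, ?_, ?_⟩
    · rw [behaviour_par, behaviour_par, heq, add_assoc]
    · simp only [Proc.size] at hsize ⊢
      omega
  | parR p _ ih =>
    obtain ⟨T, hT, heq, hsize⟩ := ih hS.2
    refine ⟨.par p T, ⟨hS.1, hT⟩, ?_, ?_⟩
    · rw [behaviour_par, behaviour_par, heq, add_left_comm]
    · simp only [Proc.size] at hsize ⊢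
      omega

end ReplOnly

namespace IsSeed

variable {S : Proc A} (hS : ReplOnly S) (hseed : IsSeed S)
include hS hseed

theorem size_le_of_topRepl {a : A} {F G : Proc A} (hG : TopRepl S a G) (hF : F.IsFin)
    (h : S.behaviour + G.behaviour = S.behaviour + F.behaviour) : G.size ≤ F.size := by
  obtain ⟨T, hT, heq, hsize⟩ := hS.exists_rest hG
  have hreplaced : Bisim (.par (.repl a F) T) S := by
    rw [← behaviour_eq_iff, behaviour_par, heq]
    exact (repl_add_eq_repl_add hT.isReplicating (heq ▸ h)).symm
  have hmin := hseed.2 (.par (.repl a F) T) ⟨hF, hT.wf⟩ hreplaced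
  simp only [Proc.size] at hsize hmin
  omega

theorem absorptionFree_of_topRepl {a : A} {G : Proc A} (hG : TopRepl S a G) :
    AbsorptionFree S.behaviour G := by
  by_contra hfree
  obtain ⟨F, hF, hlt, heq⟩ := AbsorptionFree.exists_size_lt_of_not hS.isReplicating
    (hS.isFin_of_topRepl hG) hfree
  exact hlt.not_ge (hseed.size_le_of_topRepl hS hG hF heq.symm)

theorem isReduced : IsReduced S.behaviour := fun _ _ h =>
  have ⟨G, hG, heq⟩ := hS.step_behaviour_iff.1 h
  ⟨G, hseed.absorptionFree_of_topRepl hS hG, heq⟩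

end IsSeed

/-! ### Reducts -/

theorem NSteps.par {p p' q q' : Proc A} {k m : ℕ} (hp : NSteps p k p') (hq : NSteps q m q') :
    NSteps (.par p q) (k + m) (.par p' q') := by
  induction hp with
  | zero p =>
    rw [Nat.zero_add]
    induction hq with
    | zero q => exact .zero _
    | succ h _ ih => exact .succ (.parR p h) ih
  | succ h _ ih =>
    rw [Nat.add_right_comm]
    exact .succ (.parL q h) ih

theorem Reduct.par {p p' q q' : Proc A} {k m : ℕ} (hp : Reduct p k p') (hq : Reduct q m q') :
    Reduct (.par p q) (k + m) (.par p' q') := by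
  obtain ⟨p₁, hp, hpD⟩ := hp
  obtain ⟨q₁, hq, hqD⟩ := hq
  exact ⟨_, hp.par hq, .congPar hpD hqD⟩

theorem Reduct.trans_eqD {p q r : Proc A} {k : ℕ} (hpq : Reduct p k q) (hqr : EqD q r) :
    Reduct p k r :=
  have ⟨p', hp, hD⟩ := hpq
  ⟨p', hp, hD.trans hqr⟩

theorem Step.reduct {p p' q : Proc A} {a : A} {k : ℕ} (hp : Step p a p') (hpq : Reduct p' k q) :
    Reduct p (k + 1) q :=
  have ⟨p₁, hp₁, hD⟩ := hpq
  ⟨p₁, .succ hp hp₁, hD⟩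

theorem Proc.IsFin.exists_reduct_nil {p : Proc A} (hp : p.IsFin) : ∃ k, Reduct p k .nil := by
  induction p with
  | nil => exact ⟨0, _, .zero _, .refl _⟩
  | pre a p ih => exact (ih hp).imp' (· + 1) fun k => Step.pre.reduct
  | par p q ihp ihq =>
    obtain ⟨k, hk⟩ := ihp hp.1
    obtain ⟨m, hm⟩ := ihq hp.2
    exact ⟨k + m, (hk.par hm).trans_eqD (.parNil _)⟩
  | repl a p => exact hp.elim

theorem exists_reduct_of_not_absorptionFree {s : Behaviour A} {p : Proc A} (hp : p.IsFin)
    (hfree : ¬ AbsorptionFree s p) :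
    ∃ a q k, AbsorptionFree s q ∧ s + q.behaviour.pre a = s ∧ Reduct p k (.pre a q) := by
  induction p with
  | nil => exact absurd trivial hfree
  | pre a p ih =>
    by_cases hpfree : AbsorptionFree s p
    · exact ⟨a, p, 0, hpfree, not_not.1 fun h => hfree ⟨h, hpfree⟩, _, .zero _, .refl _⟩
    · obtain ⟨b, q, k, hq, habs, hk⟩ := ih hp hpfree
      exact ⟨b, q, k + 1, hq, habs, Step.pre.reduct hk⟩
  | par p p' ihp ihp' =>
    by_cases hpfree : AbsorptionFree s p
    · obtain ⟨a, q, k, hq, habs, hk⟩ := ihp' hp.2 fun h => hfree ⟨hpfree, h⟩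
      obtain ⟨m, hm⟩ := hp.1.exists_reduct_nil
      exact ⟨a, q, m + k, hq, habs, (hm.par hk).trans_eqD ((EqD.parComm _ _).trans (.parNil _))⟩
    · obtain ⟨a, q, k, hq, habs, hk⟩ := ihp hp.1 hpfree
      obtain ⟨m, hm⟩ := hp.2.exists_reduct_nil
      exact ⟨a, q, k + m, hq, habs, (hk.par hm).trans_eqD (.parNil _)⟩
  | repl a p => exact hp.elim

/-- If `F` reaches an absorbed `a.G` with `G` absorption-free, then `S` answers the transition of
`a.G` with a component `!a.G'`, and `G ~ G'`. -/
theorem Dis.absorptionFree {S F : Proc A} (hd : Dis S F) (hS : ReplOnly S) (hseed : IsSeed S)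
    (hF : F.IsFin) : AbsorptionFree S.behaviour F := by
  by_contra hfree
  obtain ⟨a, G, k, hG, habs, hk⟩ := exists_reduct_of_not_absorptionFree hF hfree
  have hmove : S.behaviour.Step a (S.behaviour + G.behaviour) := by
    have hpre := (Behaviour.step_pre (a := a) (x := G.behaviour)).add_left S.behaviour
    rwa [habs] at hpre
  obtain ⟨G', hG', heq⟩ := hS.step_behaviour_iff.1 hmove
  have hGG' : Bisim G G' := (hseed.isReduced hS).bisim_of_add_eq_add hG
    (hseed.absorptionFree_of_topRepl hS hG') heq
  have hGD : EqD G G' := hGG'.eqD hG.isFin (hS.isFin_of_topRepl hG')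
  exact hd a G' hG' k (hk.trans_eqD (.congPre a hGD))

end CCS

theorem cancel_F_F_general {A : Type} (S F₁ F₂ : CCS.Proc A) (hS : CCS.ReplOnly S)
    (hseed : CCS.IsSeed S) (hF₁ : F₁.IsFin) (hF₂ : F₂.IsFin)
    (h : CCS.Bisim (CCS.Proc.par S F₁) (CCS.Proc.par S F₂))
    (hd₁ : CCS.Dis S F₁) (hd₂ : CCS.Dis S F₂) :
    CCS.Bisim F₁ F₂ :=
  (hseed.isReduced hS).bisim_of_add_eq_add (hd₁.absorptionFree hS hseed hF₁)
    (hd₂.absorptionFree hS hseed hF₂) (CCS.behaviour_eq_iff.2 h)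

/-- If `S | F₁ ~ S | F₂` and `S ⫫ Fᵢ` (`i = 1,2`), then `F₁ ~ F₂`. -/
theorem cancel_F_F {A : Type} [Countable A]
    (S F₁ F₂ : CCS.Proc A) (hS : CCS.ReplOnly S) (hseed : CCS.IsSeed S)
    (hF₁ : F₁.IsFin) (hF₂ : F₂.IsFin)
    (h : CCS.Bisim (CCS.Proc.par S F₁) (CCS.Proc.par S F₂))
    (hd₁ : CCS.Dis S F₁) (hd₂ : CCS.Dis S F₂) :
    CCS.Bisim F₁ F₂ :=
  cancel_F_F_general S F₁ F₂ hS hseed hF₁ hF₂ h hd₁ hd₂
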